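/- For any S_G ⊆ {1,…,N_G} and S_B ⊆ {1,…,E} with |S_G| + |S_B| = N_G − 1 and S_G ⊥ S_B, there exist f** ∈ Ω_f, ξ** ∈ Ω_ξ satisfying both that the closure of the interior of Ω_sl(ξ**) equals the closure of Ω_sl(ξ**) and that ~Ω_sl(ξ**, f**) is dense in Ω_sl(ξ**), and a nonempty open ball W ⊆ ~Ω_sl(ξ**, f**), such that for every s^l ∈ W the binding inequality constraints at the unique optimal solution of the DC-OPF with data (f**, ξ**, s^l) consist of exactly one generation bound for each generator i ∈ S_G, exactly one flow bound for each branch e ∈ S_B, and nothing else. -/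

import Mathlib

open Matrix

noncomputable section

/-- Parameter tuple ξ = (s̄, s̲, p̄, p̲). -/
abbrev XiT (NG E : ℕ) : Type := (Fin NG → ℝ) × (Fin NG → ℝ) × (Fin E → ℝ) × (Fin E → ℝ)

/-- Each column of `C` has exactly one `+1`, one `-1`, and zeros elsewhere. -/
def IsIncidence {NG NL E : ℕ} (C : Matrix (Fin (NG + NL)) (Fin E) ℝ) : Prop :=
  ∀ e : Fin E, ∃ u v : Fin (NG + NL), u ≠ v ∧ C u e = 1 ∧ C v e = -1 ∧
    ∀ w : Fin (NG + NL), w ≠ u → w ≠ v → C w e = 0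

/-- Connectedness: the kernel of `Cᵀ` consists exactly of the constant vectors. -/
def ConnectedIncidence {NG NL E : ℕ} (C : Matrix (Fin (NG + NL)) (Fin E) ℝ) : Prop :=
  ∀ x : Fin (NG + NL) → ℝ, Cᵀ *ᵥ x = 0 ↔ ∃ c : ℝ, x = fun _ => c

/-- `B` is diagonal with strictly positive diagonal entries. -/
def PosDiag {E : ℕ} (B : Matrix (Fin E) (Fin E) ℝ) : Prop :=
  (∀ e, 0 < B e e) ∧ ∀ e e' : Fin E, e ≠ e' → B e e' = 0

/-- Feasibility of `(s^g, θ)` for the DC-OPF with limits `ξ` and loads `sl`. -/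
def Feasible {NG NL E : ℕ} (C : Matrix (Fin (NG + NL)) (Fin E) ℝ)
    (B : Matrix (Fin E) (Fin E) ℝ) (ξ : XiT NG E) (sl : Fin NL → ℝ)
    (sg : Fin NG → ℝ) (θ : Fin (NG + NL) → ℝ) : Prop :=
  (∀ h : 0 < NG + NL, θ ⟨0, h⟩ = 0) ∧
  (C * B * Cᵀ) *ᵥ θ = Fin.append sg (fun j => -(sl j)) ∧
  (∀ i, ξ.2.1 i ≤ sg i ∧ sg i ≤ ξ.1 i) ∧
  (∀ e, ξ.2.2.2 e ≤ ((B * Cᵀ) *ᵥ θ) e ∧ ((B * Cᵀ) *ᵥ θ) e ≤ ξ.2.2.1 e)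

/-- The set Ω_ξ of admissible system limits. -/
def OmegaXi {NG NL E : ℕ} (C : Matrix (Fin (NG + NL)) (Fin E) ℝ)
    (B : Matrix (Fin E) (Fin E) ℝ) : Set (XiT NG E) :=
  { ξ | (∀ i, 0 ≤ ξ.2.1 i) ∧ (∀ i, ξ.2.1 i < ξ.1 i) ∧ (∀ e, ξ.2.2.2 e < ξ.2.2.1 e) ∧
    ∃ sl : Fin NL → ℝ, (∀ j, 0 < sl j) ∧ ∃ sg θ, Feasible C B ξ sl sg θ }

/-- The set Ω_sl(ξ) of strictly positive feasible load profiles. -/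
def OmegaSl {NG NL E : ℕ} (C : Matrix (Fin (NG + NL)) (Fin E) ℝ)
    (B : Matrix (Fin E) (Fin E) ℝ) (ξ : XiT NG E) : Set (Fin NL → ℝ) :=
  { sl | (∀ j, 0 < sl j) ∧ ∃ sg θ, Feasible C B ξ sl sg θ }

/-- `(sg, θ)` is an optimal solution of the DC-OPF. -/
def IsOptimal {NG NL E : ℕ} (C : Matrix (Fin (NG + NL)) (Fin E) ℝ)
    (B : Matrix (Fin E) (Fin E) ℝ) (f : Fin NG → ℝ) (ξ : XiT NG E)
    (sl : Fin NL → ℝ) (sg : Fin NG → ℝ) (θ : Fin (NG + NL) → ℝ) : Prop :=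
  Feasible C B ξ sl sg θ ∧
  ∀ sg' θ', Feasible C B ξ sl sg' θ' → f ⬝ᵥ sg ≤ f ⬝ᵥ sg'

/-- The matrix M: first N rows are C B Cᵀ, last row is e₁ᵀ. -/
def Mmat {NG NL E : ℕ} (C : Matrix (Fin (NG + NL)) (Fin E) ℝ)
    (B : Matrix (Fin E) (Fin E) ℝ) : Matrix (Fin (NG + NL + 1)) (Fin (NG + NL)) ℝ :=
  Matrix.of fun i j => if h : (i : ℕ) < NG + NL then (C * B * Cᵀ) ⟨(i : ℕ), h⟩ j
    else if (j : ℕ) = 0 then 1 else 0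

/-- KKT point for the DC-OPF. -/
def IsKKT {NG NL E : ℕ} (C : Matrix (Fin (NG + NL)) (Fin E) ℝ)
    (B : Matrix (Fin E) (Fin E) ℝ) (f : Fin NG → ℝ) (ξ : XiT NG E)
    (sl : Fin NL → ℝ) (sg : Fin NG → ℝ) (θ : Fin (NG + NL) → ℝ)
    (τ : Fin (NG + NL + 1) → ℝ) (μp μm : Fin E → ℝ) (lp lm : Fin NG → ℝ) : Prop :=
  Feasible C B ξ sl sg θ ∧
  (Mmat C B)ᵀ *ᵥ τ + (C * B) *ᵥ (μp - μm) = 0 ∧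
  (∀ i : Fin NG, -f i = -τ (Fin.castLE (by omega) i) + lp i - lm i) ∧
  (∀ e, 0 ≤ μp e) ∧ (∀ e, 0 ≤ μm e) ∧ (∀ i, 0 ≤ lp i) ∧ (∀ i, 0 ≤ lm i) ∧
  μp ⬝ᵥ (((B * Cᵀ) *ᵥ θ) - ξ.2.2.1) = 0 ∧
  μm ⬝ᵥ (ξ.2.2.2 - ((B * Cᵀ) *ᵥ θ)) = 0 ∧
  lp ⬝ᵥ (sg - ξ.1) = 0 ∧
  lm ⬝ᵥ (ξ.2.1 - sg) = 0

/-- ℓ₀ "norm": number of nonzero entries. -/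
def nnz {n : ℕ} (v : Fin n → ℝ) : ℕ := Set.ncard { i | v i ≠ 0 }

/-- The set Ω_f of well-behaved cost vectors. -/
def OmegaF {NG NL E : ℕ} (C : Matrix (Fin (NG + NL)) (Fin E) ℝ)
    (B : Matrix (Fin E) (Fin E) ℝ) : Set (Fin NG → ℝ) :=
  { f | (∀ i, 0 ≤ f i) ∧
    ∀ ξ ∈ OmegaXi C B, ∀ sl ∈ OmegaSl C B ξ,
      (∃! p : (Fin NG → ℝ) × (Fin (NG + NL) → ℝ), IsOptimal C B f ξ sl p.1 p.2) ∧
      ∀ sg θ τ μp μm lp lm, IsKKT C B f ξ sl sg θ τ μp μm lp lm →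
        NG - 1 ≤ nnz μp + nnz μm + nnz lp + nnz lm }

/-- Number of binding inequality constraints at `(sg, θ)` (among the 2N_G + 2E). -/
def bindingCount {NG NL E : ℕ} (C : Matrix (Fin (NG + NL)) (Fin E) ℝ)
    (B : Matrix (Fin E) (Fin E) ℝ) (ξ : XiT NG E) (sg : Fin NG → ℝ)
    (θ : Fin (NG + NL) → ℝ) : ℕ :=
  Set.ncard { i : Fin NG | sg i = ξ.1 i } + Set.ncard { i : Fin NG | sg i = ξ.2.1 i } +
  Set.ncard { e : Fin E | ((B * Cᵀ) *ᵥ θ) e = ξ.2.2.1 e } +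
  Set.ncard { e : Fin E | ((B * Cᵀ) *ᵥ θ) e = ξ.2.2.2 e }

/-- ~Ω_sl(ξ, f): loads with exactly N_G − 1 binding constraints at the optimum. -/
def TOmegaSl {NG NL E : ℕ} (C : Matrix (Fin (NG + NL)) (Fin E) ℝ)
    (B : Matrix (Fin E) (Fin E) ℝ) (f : Fin NG → ℝ) (ξ : XiT NG E) :
    Set (Fin NL → ℝ) :=
  { sl | sl ∈ OmegaSl C B ξ ∧
    ∀ sg θ, IsOptimal C B f ξ sl sg θ → bindingCount C B ξ sg θ = NG - 1 }

/-- Indices of binding inequality constraints: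
`inl i` = upper generation, `inr (inl i)` = lower generation,
`inr (inr (inl e))` = upper flow, `inr (inr (inr e))` = lower flow. -/
def BindingIdx {NG NL E : ℕ} (C : Matrix (Fin (NG + NL)) (Fin E) ℝ)
    (B : Matrix (Fin E) (Fin E) ℝ) (ξ : XiT NG E) (sg : Fin NG → ℝ)
    (θ : Fin (NG + NL) → ℝ) : Set (Fin NG ⊕ Fin NG ⊕ Fin E ⊕ Fin E) :=
  { c | match c with
    | Sum.inl i => sg i = ξ.1 i
    | Sum.inr (Sum.inl i) => sg i = ξ.2.1 i
    | Sum.inr (Sum.inr (Sum.inl e)) => ((B * Cᵀ) *ᵥ θ) e = ξ.2.2.1 e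
    | Sum.inr (Sum.inr (Sum.inr e)) => ((B * Cᵀ) *ᵥ θ) e = ξ.2.2.2 e }

/-- Gradients of the N + 1 equality constraints, as vectors in ℝ^{N_G} × ℝ^{N}. -/
def eqGrad {NG NL E : ℕ} (C : Matrix (Fin (NG + NL)) (Fin E) ℝ)
    (B : Matrix (Fin E) (Fin E) ℝ) :
    (Unit ⊕ Fin (NG + NL)) → (Fin NG → ℝ) × (Fin (NG + NL) → ℝ)
  | Sum.inl _ => (0, fun j => if (j : ℕ) = 0 then 1 else 0)
  | Sum.inr i => ((fun k : Fin NG => if (k : ℕ) = (i : ℕ) then -1 else 0),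
      fun j => (C * B * Cᵀ) i j)

/-- Gradients of the inequality constraints. -/
def ineqGrad {NG NL E : ℕ} (C : Matrix (Fin (NG + NL)) (Fin E) ℝ)
    (B : Matrix (Fin E) (Fin E) ℝ) :
    (Fin NG ⊕ Fin NG ⊕ Fin E ⊕ Fin E) → (Fin NG → ℝ) × (Fin (NG + NL) → ℝ)
  | Sum.inl i => (Pi.single i 1, 0)
  | Sum.inr (Sum.inl i) => (-Pi.single i 1, 0)
  | Sum.inr (Sum.inr (Sum.inl e)) => (0, fun j => (B * Cᵀ) e j)
  | Sum.inr (Sum.inr (Sum.inr e)) => (0, fun j => -(B * Cᵀ) e j)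

/-- The family of gradients of all equality constraints together with the binding
inequality constraints at `(sg, θ)`. -/
def fullGrad {NG NL E : ℕ} (C : Matrix (Fin (NG + NL)) (Fin E) ℝ)
    (B : Matrix (Fin E) (Fin E) ℝ) (ξ : XiT NG E) (sg : Fin NG → ℝ)
    (θ : Fin (NG + NL) → ℝ) :
    ((Unit ⊕ Fin (NG + NL)) ⊕ ↥(BindingIdx C B ξ sg θ)) →
      (Fin NG → ℝ) × (Fin (NG + NL) → ℝ) :=
  fun i => match i with
    | Sum.inl j => eqGrad C B j
    | Sum.inr c => ineqGrad C B c.1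

/-- S_G ⊥ S_B : the equality-constraint gradients together with the gradients
`(e_i, 0)`, `i ∈ S_G`, and `(0, row e of B Cᵀ)`, `e ∈ S_B`, are linearly independent. -/
def Perp {NG NL E : ℕ} (C : Matrix (Fin (NG + NL)) (Fin E) ℝ)
    (B : Matrix (Fin E) (Fin E) ℝ) (SG : Finset (Fin NG)) (SB : Finset (Fin E)) : Prop :=
  LinearIndependent ℝ (fun i : (Unit ⊕ Fin (NG + NL)) ⊕ (↥SG ⊕ ↥SB) =>
    match i with
    | Sum.inl j => eqGrad C B j
    | Sum.inr (Sum.inl g) => ((Pi.single (g : Fin NG) 1 : Fin NG → ℝ), (0 : Fin (NG + NL) → ℝ))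
    | Sum.inr (Sum.inr e) => ((0 : Fin NG → ℝ), fun j => (B * Cᵀ) (e : Fin E) j))

/-- The OPF operator: the generation part of the (unique) optimal solution. -/
def OPFmap {NG NL E : ℕ} (C : Matrix (Fin (NG + NL)) (Fin E) ℝ)
    (B : Matrix (Fin E) (Fin E) ℝ) (f : Fin NG → ℝ) (ξ : XiT NG E)
    (sl : Fin NL → ℝ) : Fin NG → ℝ := by
  classical
  exact if h : ∃ p : (Fin NG → ℝ) × (Fin (NG + NL) → ℝ), IsOptimal C B f ξ sl p.1 p.2
    then h.choose.1 else 0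

/-- The matrix R(S_G, S_B)ᵀ: rows N_G+1,…,N of C B Cᵀ; the rows of C B Cᵀ indexed
by S_G; the rows of B Cᵀ indexed by S_B; and e₁ᵀ. -/
def Rmat {NG NL E : ℕ} (C : Matrix (Fin (NG + NL)) (Fin E) ℝ)
    (B : Matrix (Fin E) (Fin E) ℝ) (SG : Finset (Fin NG)) (SB : Finset (Fin E)) :
    Matrix ((Fin NL ⊕ (↥SG ⊕ ↥SB)) ⊕ Unit) (Fin (NG + NL)) ℝ :=
  Matrix.of fun i j => match i with
    | Sum.inl (Sum.inl k) => (C * B * Cᵀ) (Fin.natAdd NG k) j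
    | Sum.inl (Sum.inr (Sum.inl g)) => (C * B * Cᵀ) (Fin.castAdd NL (g : Fin NG)) j
    | Sum.inl (Sum.inr (Sum.inr e)) => (B * Cᵀ) (e : Fin E) j
    | Sum.inr _ => if (j : ℕ) = 0 then 1 else 0

/-- The matrix Π applied to a load vector: embeds ℝ^{N_L} in the row-index space. -/
def padSl {NG NL E : ℕ} (SG : Finset (Fin NG)) (SB : Finset (Fin E))
    (v : Fin NL → ℝ) : (Fin NL ⊕ (↥SG ⊕ ↥SB)) ⊕ Unit → ℝ
  | Sum.inl (Sum.inl k) => v k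
  | _ => 0

/-- J(S_G, S_B) as a map: v ↦ −G (R(S_G,S_B)ᵀ)⁻¹ Π v, where G consists of the
first N_G rows of C B Cᵀ. -/
def JFun {NG NL E : ℕ} (C : Matrix (Fin (NG + NL)) (Fin E) ℝ)
    (B : Matrix (Fin E) (Fin E) ℝ) (SG : Finset (Fin NG)) (SB : Finset (Fin E))
    (v : Fin NL → ℝ) : Fin NG → ℝ :=
  fun i =>
    -(((C * B * Cᵀ) *ᵥ (Function.invFun (Rmat C B SG SB).mulVec (padSl SG SB v)))
      (Fin.castAdd NL i))

/-- J(S_G, S_B) as an N_G × N_L matrix. -/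
def Jmatrix {NG NL E : ℕ} (C : Matrix (Fin (NG + NL)) (Fin E) ℝ)
    (B : Matrix (Fin E) (Fin E) ℝ) (SG : Finset (Fin NG)) (SB : Finset (Fin E)) :
    Matrix (Fin NG) (Fin NL) ℝ :=
  Matrix.of fun i j => JFun C B SG SB (Pi.single j 1) i

/-!
Eliminating the generation turns the DC-OPF into a linear program in the phase angles, with
two-sided bounds on the coordinates of a linear map and the load as right-hand side. For a generic
cost, minimizers are unique and every multiplier has at least as many nonzero entries as a vertex
needs tight bounds, whatever the bounds and the load are. So if a set `S` of coordinates cuts out a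
vertex, the cost has a multiplier supported exactly on `S`; putting the bounds of `S` on the side
prescribed by its signs, and leaving slack elsewhere, makes any prescribed point optimal with strict
complementarity. This survives every small change of the bounds and of the load. After a small
generic change of the bounds, the loads admitting a point with too many tight bounds lie in finitely
many hyperplanes. The feasible loads form a convex set with interior points, so each of them is a
limit of feasible loads off these hyperplanes.
-/

section Density

variable {X Y ι : Type*} [AddCommGroup X] [TopologicalSpace X] [IsTopologicalAddGroup X]
  [Module ℝ X] [ContinuousSMul ℝ X] [Finite ι]

theorem dense_setOfPred_forall_ne {φ : ι → X →L[ℝ] ℝ} (hφ : ∀ i, φ i ≠ 0) (a : ι → ℝ) :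
    Dense {x | ∀ i, φ i x ≠ a i} := by
  have hopen (i : ι) : IsOpen {x | φ i x ≠ a i} := isOpen_ne.preimage (φ i).continuous
  have hdense (i : ι) : Dense {x | φ i x ≠ a i} :=
    (dense_compl_singleton (a i)).preimage ((φ i).isOpenMap_of_ne_zero (hφ i))
  simpa only [Set.sInter_range, Set.iInter_ofPred] using
    (Set.finite_range fun i => {x | φ i x ≠ a i}).dense_sInter
      (Set.forall_mem_range.2 hopen) (Set.forall_mem_range.2 hdense)

variable [AddCommGroup Y] [TopologicalSpace Y] [IsTopologicalAddGroup Y]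
  [Module ℝ Y] [ContinuousSMul ℝ Y]

theorem dense_setOfPred_dense_forall_ne_zero {ψ : ι → X × Y →L[ℝ] ℝ} (hψ : ∀ i, ψ i ≠ 0) :
    Dense {x | Dense {y | ∀ i, ψ i (x, y) ≠ 0}} := by
  have hsplit (i : ι) (x : X) (y : Y) :
      ψ i (x, y) = ψ i (x, 0) + (ψ i ∘L .inr ℝ X Y) y := by
    simp [← map_add]
  have hvert (i : {i // ψ i ∘L .inr ℝ X Y = 0}) : ψ i ∘L .inl ℝ X Y ≠ 0 := fun h =>
    hψ i (ContinuousLinearMap.prod_ext h i.2)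
  refine (dense_setOfPred_forall_ne hvert fun _ => 0).mono fun x hx => ?_
  refine (dense_setOfPred_forall_ne (fun i : {i // ψ i ∘L .inr ℝ X Y ≠ 0} => i.2)
    fun i => -ψ i (x, 0)).mono fun y hy i => ?_
  by_cases hi : ψ i ∘L .inr ℝ X Y = 0
  · rw [hsplit, hi, _root_.zero_apply, add_zero]
    exact hx ⟨i, hi⟩
  · rw [hsplit, Ne, add_eq_zero_iff_neg_eq, eq_comm]
    exact hy ⟨i, hi⟩

theorem subset_closure_inter_of_convex_of_dense {s D : Set X} (hs : Convex ℝ s)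
    (hne : (interior s).Nonempty) (hD : Dense D) : s ⊆ closure (s ∩ D) :=
  calc s ⊆ closure s := subset_closure
    _ = closure (interior s) := (hs.closure_interior_eq_closure_of_nonempty_interior hne).symm
    _ ⊆ closure (interior s ∩ D) :=
      closure_minimal (hD.open_subset_closure_inter isOpen_interior) isClosed_closure
    _ ⊆ closure (s ∩ D) := closure_mono (Set.inter_subset_inter_left D interior_subset)

end Density

/-- The constraint matrices of a linear program over `V` with equality constraints `eqMap v = s` and
two-sided bounds on the coordinates of `boxMap v`. The right-hand sides `s`, the bounds and the cost
are kept as parameters: `b.1` and `b.2` always denote the lower and upper bounds. -/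
structure BoxLP (V W κ : Type*) [AddCommGroup V] [Module ℝ V] [AddCommGroup W] [Module ℝ W] where
  eqMap : V →ₗ[ℝ] W
  boxMap : V →ₗ[ℝ] κ → ℝ

namespace BoxLP

open Filter Topology Module LinearMap

section Algebra

variable {V W κ : Type*} [AddCommGroup V] [Module ℝ V] [AddCommGroup W] [Module ℝ W]
  (P : BoxLP V W κ)

/-- The feasible points for the bounds `b` and the right-hand side `s`. -/
def feasibleSet (b : (κ → ℝ) × (κ → ℝ)) (s : W) : Set V :=
  {v | P.eqMap v = s ∧ P.boxMap v ∈ Set.Icc b.1 b.2}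

/-- `v` is an optimal solution for the cost `c`, the bounds `b` and the right-hand side `s`. -/
def IsMinimizer (c : V →ₗ[ℝ] ℝ) (b : (κ → ℝ) × (κ → ℝ)) (s : W) (v : V) : Prop :=
  v ∈ P.feasibleSet b s ∧ IsMinOn c (P.feasibleSet b s) v

/-- The indices of the two-sided constraints with a bound attained at `v`. -/
def active (b : (κ → ℝ) × (κ → ℝ)) (v : V) : Set κ :=
  {k | P.boxMap v k = b.1 k ∨ P.boxMap v k = b.2 k}

/-- The equality constraints together with the box constraints indexed by `T`. -/
def tight (T : Set κ) : V →ₗ[ℝ] W × (T → ℝ) :=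
  P.eqMap.prod (funLeft ℝ ℝ Subtype.val ∘ₗ P.boxMap)

open Classical in
/-- The bounds selected by `σ`: the lower one at the indices in `σ`, the upper one elsewhere. -/
def corner (σ : Set κ) : (κ → ℝ) × (κ → ℝ) →ₗ[ℝ] κ → ℝ :=
  pi fun k => if k ∈ σ then proj k ∘ₗ fst ℝ _ _ else proj k ∘ₗ snd ℝ _ _

variable (W) in
/-- The value of `tight T` at a point where the equality constraints hold and every index in `T`
sits at the bound selected by `σ`, as a linear function of the bounds and the right-hand side. -/
def tightValues (T σ : Set κ) : ((κ → ℝ) × (κ → ℝ)) × W →ₗ[ℝ] W × (T → ℝ) :=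
  (snd ℝ _ W).prod (funLeft ℝ ℝ Subtype.val ∘ₗ corner σ ∘ₗ fst ℝ _ W)

/-- A cost that is constant along a face of the arrangement of constraints only if that face is a
single point. This nondegeneracy makes minimizers unique and forces multipliers to have large
support, for all bounds and right-hand sides at once. -/
def IsGenericCost (c : V →ₗ[ℝ] ℝ) : Prop :=
  ∀ T : Set κ, ker (P.tight T) ≤ ker c → ker (P.tight T) = ⊥

/-- Lagrange multipliers `α` of the box constraints, the multipliers of the equality constraints
being eliminated by restricting to `ker eqMap`. A positive entry prices the lower bound, a negative
one the upper bound. -/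
def IsMultiplier [Fintype κ] (c : V →ₗ[ℝ] ℝ) (α : κ → ℝ) : Prop :=
  ∀ v ∈ ker P.eqMap, c v = α ⬝ᵥ P.boxMap v

/-- Complementary slackness in which a multiplier vanishes only at inactive constraints. -/
def StrictlyComplementary (α : κ → ℝ) (b : (κ → ℝ) × (κ → ℝ)) (v : V) : Prop :=
  ∀ k, (0 < α k → P.boxMap v k = b.1 k) ∧ (α k < 0 → P.boxMap v k = b.2 k) ∧
    (α k = 0 → P.boxMap v k ∈ Set.Ioo (b.1 k) (b.2 k))

variable {P} {c : V →ₗ[ℝ] ℝ} {b : (κ → ℝ) × (κ → ℝ)} {s : W} {v : V} {T : Set κ}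

theorem corner_apply_of_mem {σ : Set κ} {k : κ} (hk : k ∈ σ) : corner σ b k = b.1 k := by
  simp [corner, hk]

theorem corner_apply_of_notMem {σ : Set κ} {k : κ} (hk : k ∉ σ) : corner σ b k = b.2 k := by
  simp [corner, hk]

theorem surjective_tightValues (T σ : Set κ) : Function.Surjective (tightValues W T σ) := by
  rintro ⟨s, t⟩
  obtain ⟨r, rfl⟩ := funLeft_surjective_of_injective ℝ ℝ _ (Subtype.val_injective (p := (· ∈ T))) t
  refine ⟨((r, r), s), ?_⟩
  ext k
  · rfl
  · by_cases hk : k.1 ∈ σ <;> simp [tightValues, corner, hk]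

theorem tightValues_active (P : BoxLP V W κ) (b : (κ → ℝ) × (κ → ℝ)) (v : V) :
    tightValues W (P.active b v) {k | P.boxMap v k = b.1 k} (b, P.eqMap v) =
      P.tight (P.active b v) v := by
  refine Prod.ext rfl (funext fun ⟨k, hk⟩ => ?_)
  by_cases hlower : P.boxMap v k = b.1 k
  · exact (corner_apply_of_mem (σ := {k | P.boxMap v k = b.1 k}) hlower).trans hlower.symm
  · exact (corner_apply_of_notMem (σ := {k | P.boxMap v k = b.1 k}) hlower).trans
      (hk.resolve_left hlower).symm

theorem mem_ker_tight : v ∈ ker (P.tight T) ↔ P.eqMap v = 0 ∧ ∀ k ∈ T, P.boxMap v k = 0 := by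
  simp [tight, funext_iff]

theorem finrank_prod_fun_coe [Finite κ] (W : Type*) [AddCommGroup W] [Module ℝ W]
    [FiniteDimensional ℝ W] (T : Set κ) : finrank ℝ (W × (T → ℝ)) = finrank ℝ W + T.ncard := by
  have := Fintype.ofFinite T
  rw [finrank_prod, finrank_fintype_fun_eq_card, ← Nat.card_eq_fintype_card, Nat.card_coe_set_eq]

theorem finrank_le_of_ker_tight_eq_bot [Finite κ] [FiniteDimensional ℝ W]
    (h : ker (P.tight T) = ⊥) : finrank ℝ V ≤ finrank ℝ W + T.ncard :=
  (finrank_le_finrank_of_injective (ker_eq_bot.1 h)).trans_eq (finrank_prod_fun_coe W T)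

theorem IsMultiplier.ker_tight_support_le [Fintype κ] {α : κ → ℝ} (hα : P.IsMultiplier c α) :
    ker (P.tight (Function.support α)) ≤ ker c := by
  intro v hv
  obtain ⟨hv₀, hv⟩ := mem_ker_tight.1 hv
  rw [LinearMap.mem_ker, hα v hv₀]
  refine Finset.sum_eq_zero fun k _ => ?_
  by_cases hk : α k = 0
  · rw [hk, zero_mul]
  · rw [hv k hk, mul_zero]

theorem exists_isMultiplier [Fintype κ] (h : ker (P.tight T) ≤ ker c) :
    ∃ α : κ → ℝ, Function.support α ⊆ T ∧ P.IsMultiplier c α := by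
  have := Fintype.ofFinite T
  let K := ker P.eqMap
  let row (k : T) : K →ₗ[ℝ] ℝ := proj k.1 ∘ₗ P.boxMap ∘ₗ K.subtype
  have hspan : c ∘ₗ K.subtype ∈ Submodule.span ℝ (Set.range row) := by
    refine mem_span_of_iInf_ker_le_ker fun v hv => ?_
    have hrow : ∀ k, row k v = 0 := (Submodule.mem_iInf _).1 hv
    exact h (mem_ker_tight.2 ⟨v.2, fun k hk => hrow ⟨k, hk⟩⟩)
  obtain ⟨β, hβ⟩ := (Submodule.mem_span_range_iff_exists_fun ℝ).1 hspan
  have hzero {k : κ} (hk : k ∉ T) : Function.extend Subtype.val β 0 k = 0 :=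
    Function.extend_apply' _ _ _ fun ⟨k', hk'⟩ => hk (hk' ▸ k'.2)
  refine ⟨Function.extend Subtype.val β 0, fun k => not_imp_comm.1 hzero, fun v hv => ?_⟩
  calc c v = (∑ k, β k • row k) ⟨v, hv⟩ := congr($hβ.symm ⟨v, hv⟩)
    _ = ∑ k : T, β k * P.boxMap v k := by simp [row]
    _ = Function.extend Subtype.val β 0 ⬝ᵥ P.boxMap v :=
      Fintype.sum_of_injective _ Subtype.val_injective _ _
        (fun k hk => by rw [hzero (by simpa using hk), zero_mul])
        fun k => by rw [Subtype.val_injective.extend_apply]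

theorem IsGenericCost.finrank_le_ncard_support [Fintype κ] [FiniteDimensional ℝ W]
    (hc : P.IsGenericCost c) {α : κ → ℝ} (hα : P.IsMultiplier c α) :
    finrank ℝ V ≤ finrank ℝ W + (Function.support α).ncard :=
  finrank_le_of_ker_tight_eq_bot (hc _ hα.ker_tight_support_le)

theorem isMinimizer_of_isMultiplier [Fintype κ] {α : κ → ℝ} (hα : P.IsMultiplier c α)
    (hv : v ∈ P.feasibleSet b s) (hpos : ∀ k, 0 < α k → P.boxMap v k = b.1 k)
    (hneg : ∀ k, α k < 0 → P.boxMap v k = b.2 k) : P.IsMinimizer c b s v := by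
  refine ⟨hv, fun w hw => ?_⟩
  have hdiff : c (w - v) = α ⬝ᵥ P.boxMap (w - v) := hα _ (by simp [hw.1, hv.1])
  have hnonneg : 0 ≤ α ⬝ᵥ P.boxMap (w - v) := by
    refine Finset.sum_nonneg fun k _ => ?_
    rw [map_sub, Pi.sub_apply]
    rcases lt_trichotomy (α k) 0 with hk | hk | hk
    · exact mul_nonneg_of_nonpos_of_nonpos hk.le (by linarith [hneg k hk, hw.2.2 k])
    · rw [hk, zero_mul]
    · exact mul_nonneg hk.le (by linarith [hpos k hk, hw.2.1 k])
  rw [map_sub] at hdiff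
  change c v ≤ c w
  linarith

theorem StrictlyComplementary.active_eq {α : κ → ℝ} (h : P.StrictlyComplementary α b v) :
    P.active b v = Function.support α := by
  ext k
  rcases lt_trichotomy (α k) 0 with hk | hk | hk
  · exact iff_of_true (.inr ((h k).2.1 hk)) hk.ne
  · have hIoo := (h k).2.2 hk
    exact iff_of_false (not_or.2 ⟨hIoo.1.ne', hIoo.2.ne⟩) (not_not.2 hk)
  · exact iff_of_true (.inl ((h k).1 hk)) hk.ne'

theorem StrictlyComplementary.isMinimizer [Fintype κ] {α : κ → ℝ}
    (h : P.StrictlyComplementary α b v) (hα : P.IsMultiplier c α) (hb : b.1 ≤ b.2)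
    (heq : P.eqMap v = s) : P.IsMinimizer c b s v := by
  have hbox (k : κ) : P.boxMap v k ∈ Set.Icc (b.1 k) (b.2 k) := by
    rcases lt_trichotomy (α k) 0 with hk | hk | hk
    · rw [(h k).2.1 hk]
      exact Set.right_mem_Icc.2 (hb k)
    · exact Set.Ioo_subset_Icc_self ((h k).2.2 hk)
    · rw [(h k).1 hk]
      exact Set.left_mem_Icc.2 (hb k)
  exact isMinimizer_of_isMultiplier hα ⟨heq, fun k => (hbox k).1, fun k => (hbox k).2⟩
    (fun k => (h k).1) fun k => (h k).2.1

theorem convex_feasibleSet (b : (κ → ℝ) × (κ → ℝ)) (s : W) : Convex ℝ (P.feasibleSet b s) :=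
  ((convex_singleton s).linear_preimage P.eqMap).inter
    ((convex_Icc b.1 b.2).linear_preimage P.boxMap)

theorem convex_setOfPred_feasibleSet_nonempty (b : (κ → ℝ) × (κ → ℝ)) :
    Convex ℝ {s | (P.feasibleSet b s).Nonempty} := by
  have himage : {s | (P.feasibleSet b s).Nonempty} =
      P.eqMap '' (P.boxMap ⁻¹' Set.Icc b.1 b.2) := by
    ext s
    exact exists_congr fun v => and_comm
  rw [himage]
  exact ((convex_Icc b.1 b.2).linear_preimage P.boxMap).linear_image P.eqMap

theorem IsMinimizer.ker_tight_active_le [Finite κ] (hv : P.IsMinimizer c b s v) :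
    ker (P.tight (P.active b v)) ≤ ker c := by
  intro d hd
  obtain ⟨hd₀, hd⟩ := mem_ker_tight.1 hd
  have hbox : ∀ᶠ t : ℝ in 𝓝 0, ∀ k, P.boxMap (v + t • d) k ∈ Set.Icc (b.1 k) (b.2 k) := by
    refine eventually_all.2 fun k => ?_
    simp only [map_add, map_smul, Pi.add_apply, Pi.smul_apply]
    by_cases hk : k ∈ P.active b v
    · simpa [hd k hk] using And.intro (hv.1.2.1 k) (hv.1.2.2 k)
    · obtain ⟨hlower, hupper⟩ := not_or.1 hk
      have hcont : ContinuousAt (fun t : ℝ => P.boxMap v k + t • P.boxMap d k) 0 := by fun_prop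
      exact hcont.eventually_mem (by
        simpa using Icc_mem_nhds ((hv.1.2.1 k).lt_of_ne' hlower) ((hv.1.2.2 k).lt_of_ne hupper))
  have hmin : IsLocalMin (fun t : ℝ => c v + t * c d) 0 := by
    filter_upwards [hbox] with t ht
    have := hv.2 (show v + t • d ∈ P.feasibleSet b s from
      ⟨by simp [hd₀, hv.1.1], fun k => (ht k).1, fun k => (ht k).2⟩)
    simpa using this
  refine hmin.hasDerivAt_eq_zero ?_
  simpa using ((hasDerivAt_id (0 : ℝ)).mul_const (c d)).const_add (c v)

theorem IsGenericCost.finrank_le_ncard_active [Finite κ] [FiniteDimensional ℝ W]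
    (hc : P.IsGenericCost c) (hv : P.IsMinimizer c b s v) :
    finrank ℝ V ≤ finrank ℝ W + (P.active b v).ncard :=
  finrank_le_of_ker_tight_eq_bot (hc _ hv.ker_tight_active_le)

/- At the midpoint of two minimizers a box coordinate is active only if it is active, at the same
bound, at both of them; so their difference lies in the kernel of the active constraints. -/
theorem IsGenericCost.eq_of_isMinimizer [Finite κ] (hc : P.IsGenericCost c) {w : V}
    (hv : P.IsMinimizer c b s v) (hw : P.IsMinimizer c b s w) : v = w := by
  have hmap (g : V →ₗ[ℝ] ℝ) : g (midpoint ℝ v w) = (g v + g w) / 2 := by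
    rw [midpoint_eq_smul_add, map_smul, map_add, smul_eq_mul, invOf_eq_inv, inv_mul_eq_div]
  have hmid : P.IsMinimizer c b s (midpoint ℝ v w) := by
    refine ⟨(P.convex_feasibleSet b s).midpoint_mem hv.1 hw.1, fun u hu => ?_⟩
    have hcost : c v = c w := le_antisymm (hv.2 hw.1) (hw.2 hv.1)
    rw [Set.mem_ofPred, hmap, ← hcost, add_self_div_two]
    exact hv.2 hu
  have hker : v - w ∈ ker (P.tight (P.active b (midpoint ℝ v w))) := by
    refine mem_ker_tight.2 ⟨by rw [map_sub, hv.1.1, hw.1.1, sub_self], fun k hk => ?_⟩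
    have hbox := hmap (proj k ∘ₗ P.boxMap)
    simp only [coe_comp, Function.comp_apply, proj_apply] at hbox
    rw [map_sub, Pi.sub_apply]
    rcases hk with hk | hk
    · linarith [hv.1.2.1 k, hw.1.2.1 k]
    · linarith [hv.1.2.2 k, hw.1.2.2 k]
  rw [hc _ hmid.ker_tight_active_le, Submodule.mem_bot, sub_eq_zero] at hker
  exact hker

end Algebra

section Topology

variable {V W κ : Type*} [NormedAddCommGroup V] [NormedSpace ℝ V]
  [NormedAddCommGroup W] [NormedSpace ℝ W] {P : BoxLP V W κ}
  {c : V →ₗ[ℝ] ℝ} {b : (κ → ℝ) × (κ → ℝ)} {s : W} {v v₀ : V} {S T : Set κ} {α : κ → ℝ}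

theorem exists_isMinimizer [FiniteDimensional ℝ V] [Finite κ]
    (hbox : Function.Injective P.boxMap) (c : V →ₗ[ℝ] ℝ)
    (hne : (P.feasibleSet b s).Nonempty) : ∃ v, P.IsMinimizer c b s v := by
  have := Fintype.ofFinite κ
  have hclosed : IsClosed {v | P.eqMap v = s} :=
    isClosed_eq P.eqMap.continuous_of_finiteDimensional continuous_const
  have hcompact : IsCompact (P.feasibleSet b s) :=
    ((isClosedEmbedding_of_injective (ker_eq_bot.2 hbox)).isCompact_preimage
      isCompact_Icc).inter_left hclosed
  exact hcompact.exists_isMinOn hne c.continuous_of_finiteDimensional.continuousOn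

theorem exists_continuous_vertex [Finite κ] [FiniteDimensional ℝ W] (hS : ker (P.tight S) = ⊥)
    (hcard : finrank ℝ V = finrank ℝ W + S.ncard) (σ : Set κ) :
    ∃ x : ((κ → ℝ) × (κ → ℝ)) × W → V, Continuous x ∧
      ∀ q, P.eqMap (x q) = q.2 ∧ ∀ k ∈ S, P.boxMap (x q) k = corner σ q.1 k := by
  have := Fintype.ofFinite κ
  have hdim := hcard.trans (finrank_prod_fun_coe W S).symm
  let e := LinearEquiv.ofInjectiveOfFinrankEq (P.tight S) (ker_eq_bot.1 hS) hdim
  refine ⟨e.symm ∘ₗ tightValues W S σ, LinearMap.continuous_of_finiteDimensional _, fun q => ?_⟩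
  have happly : P.tight S (e.symm (tightValues W S σ q)) = tightValues W S σ q :=
    e.apply_symm_apply _
  exact ⟨congr($happly.1), fun k hk => congr($happly.2 ⟨k, hk⟩)⟩

theorem StrictlyComplementary.eventually_exists [Finite κ] [FiniteDimensional ℝ W]
    (hv₀ : P.StrictlyComplementary α b v₀) (hker : ker (P.tight (Function.support α)) = ⊥)
    (hcard : finrank ℝ V = finrank ℝ W + (Function.support α).ncard) :
    ∀ᶠ q in 𝓝 (b, P.eqMap v₀), ∃ v, P.eqMap v = q.2 ∧ P.StrictlyComplementary α q.1 v := by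
  have := Module.Finite.of_injective _ (ker_eq_bot.1 hker)
  obtain ⟨x, hcont, hx⟩ := exists_continuous_vertex hker hcard {k | 0 < α k}
  have hlower (q) (k) (hk : 0 < α k) : P.boxMap (x q) k = q.1.1 k :=
    ((hx q).2 k hk.ne').trans (corner_apply_of_mem hk)
  have hupper (q) (k) (hk : α k < 0) : P.boxMap (x q) k = q.1.2 k :=
    ((hx q).2 k hk.ne).trans (corner_apply_of_notMem (σ := {k | 0 < α k}) hk.not_gt)
  have hx₀ : x (b, P.eqMap v₀) = v₀ := by
    rw [← sub_eq_zero, ← Submodule.mem_bot ℝ, ← hker, mem_ker_tight]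
    refine ⟨by rw [map_sub, (hx _).1, sub_self], fun k hk => ?_⟩
    rw [map_sub, Pi.sub_apply, sub_eq_zero]
    rcases (show α k ≠ 0 from hk).lt_or_gt with hneg | hpos
    · exact (hupper _ k hneg).trans ((hv₀ k).2.1 hneg).symm
    · exact (hlower _ k hpos).trans ((hv₀ k).1 hpos).symm
  have hbox (k : κ) : Continuous fun q => P.boxMap (x q) k :=
    (proj k ∘ₗ P.boxMap).continuous_of_finiteDimensional.comp hcont
  have hIoo : ∀ᶠ q in 𝓝 (b, P.eqMap v₀), ∀ k, α k = 0 →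
      P.boxMap (x q) k ∈ Set.Ioo (q.1.1 k) (q.1.2 k) := by
    refine eventually_all.2 fun k => eventually_imp_distrib_left.2 fun hk => ?_
    have h := hx₀ ▸ (hv₀ k).2.2 hk
    exact (ContinuousAt.eventually_lt (by fun_prop) (hbox k).continuousAt h.1).and
      (ContinuousAt.eventually_lt (hbox k).continuousAt (by fun_prop) h.2)
  filter_upwards [hIoo] with q hq
  exact ⟨x q, (hx q).1, fun k => ⟨hlower q k, hupper q k, hq k⟩⟩

theorem frequently_eventually_active_eq [Finite κ] [FiniteDimensional ℝ W]
    (hc : P.IsGenericCost c) (hS : ker (P.tight S) = ⊥)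
    (hcard : finrank ℝ V = finrank ℝ W + S.ncard) (v₀ : V) :
    ∃ᶠ b in 𝓝 (P.boxMap v₀, P.boxMap v₀), ∀ᶠ q in 𝓝 (b, P.eqMap v₀),
      (∀ k, q.1.1 k < q.1.2 k) ∧ ∃ v, P.IsMinimizer c q.1 q.2 v ∧ P.active q.1 v = S := by
  have := Fintype.ofFinite κ
  obtain ⟨α, hsub, hα⟩ := exists_isMultiplier (T := S) (c := c) (hS.trans_le bot_le)
  obtain rfl : Function.support α = S := by
    refine Set.eq_of_subset_of_ncard_le hsub ?_
    have := hc.finrank_le_ncard_support hα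
    omega
  let a := P.boxMap v₀
  let box (ε : ℝ) : (κ → ℝ) × (κ → ℝ) :=
    (fun k => if 0 < α k then a k else a k - ε, fun k => if α k < 0 then a k else a k + ε)
  have hbox : Tendsto box (𝓝[>] 0) (𝓝 (a, a)) := by
    have hcont : Continuous box := by
      refine .prodMk (continuous_pi fun k => ?_) (continuous_pi fun k => ?_) <;>
        split_ifs <;> fun_prop
    have hzero : box 0 = (a, a) := by simp [box]
    exact hzero ▸ hcont.continuousAt.mono_left nhdsWithin_le_nhds
  refine hbox.frequently (Eventually.frequently ?_)
  filter_upwards [self_mem_nhdsWithin] with ε (hε : 0 < ε)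
  have hlt : ∀ᶠ q in 𝓝 (box ε, P.eqMap v₀), ∀ k, q.1.1 k < q.1.2 k := by
    refine eventually_all.2 fun k => ContinuousAt.eventually_lt (by fun_prop) (by fun_prop) ?_
    dsimp only [box]
    split_ifs <;> linarith
  have hcompl : P.StrictlyComplementary α (box ε) v₀ := by
    refine fun k => ⟨fun hk => (if_pos hk).symm, fun hk => (if_pos hk).symm, fun hk => ?_⟩
    simpa [box, hk, a] using hε
  filter_upwards [hlt, hcompl.eventually_exists hS hcard] with q hlt ⟨v, hv, hvα⟩
  exact ⟨hlt, v, hvα.isMinimizer hα (fun k => (hlt k).le) hv, hvα.active_eq⟩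

theorem dense_setOfPred_dense_forall_ncard_active_le [Finite κ] [FiniteDimensional ℝ V]
    [FiniteDimensional ℝ W] (P : BoxLP V W κ) :
    Dense {b | Dense {s | ∀ v, P.eqMap v = s →
      finrank ℝ W + (P.active b v).ncard ≤ finrank ℝ V}} := by
  have := Fintype.ofFinite κ
  let Overtight := {p : Set κ × Set κ // finrank ℝ V < finrank ℝ W + p.1.ncard}
  have hfunc (p : Overtight) : ∃ φ : W × (p.1.1 → ℝ) →ₗ[ℝ] ℝ, φ ≠ 0 ∧
      range (P.tight p.1.1) ≤ ker φ := by
    refine Submodule.exists_le_ker_of_lt_top _ (lt_top_iff_ne_top.2 fun htop => ?_)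
    have hle := finrank_range_le (P.tight p.1.1)
    rw [htop, finrank_top, finrank_prod_fun_coe] at hle
    exact p.2.not_ge hle
  choose φ hφ₀ hφ using hfunc
  let ψ (p : Overtight) : ((κ → ℝ) × (κ → ℝ)) × W →L[ℝ] ℝ :=
    (φ p ∘ₗ tightValues W p.1.1 p.1.2).toContinuousLinearMap
  have hψ (p) : ψ p ≠ 0 := fun h => hφ₀ p <| by
    rw [← cancel_right (surjective_tightValues (W := W) p.1.1 p.1.2)]
    exact LinearMap.ext fun q => congr($h q)
  refine (dense_setOfPred_dense_forall_ne_zero hψ).mono fun b hb => hb.mono ?_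
  rintro s hs v rfl
  by_contra! hlt
  let p : Overtight := ⟨(P.active b v, {k | P.boxMap v k = b.1 k}), hlt⟩
  have htight : φ p (P.tight (P.active b v) v) = 0 := hφ p (mem_range_self _ v)
  exact hs p ((congrArg (φ p) (P.tightValues_active b v)).trans htight)

theorem frequently_dense_and_eventually_active_eq [Finite κ] [FiniteDimensional ℝ V]
    [FiniteDimensional ℝ W] (hc : P.IsGenericCost c) (hS : ker (P.tight S) = ⊥)
    (hcard : finrank ℝ V = finrank ℝ W + S.ncard) (v₀ : V) :
    ∃ᶠ b in 𝓝 (P.boxMap v₀, P.boxMap v₀), (∀ k, b.1 k < b.2 k) ∧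
      Dense {s | ∀ v, P.eqMap v = s → finrank ℝ W + (P.active b v).ncard ≤ finrank ℝ V} ∧
      ∀ᶠ s in 𝓝 (P.eqMap v₀), ∃ v, P.IsMinimizer c b s v ∧ P.active b v = S := by
  rw [← frequently_frequently_nhds]
  refine (frequently_eventually_active_eq hc hS hcard v₀).mono fun b hb => ?_
  have hdense := P.dense_setOfPred_dense_forall_ncard_active_le
  refine ((mem_closure_iff_frequently.1 (hdense b)).and_eventually hb.curry_nhds).mono ?_
  exact fun b' ⟨hle, hactive⟩ =>
    ⟨hactive.self_of_nhds.1, hle, hactive.mono fun _ => And.right⟩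

theorem dense_setOfPred_isGenericCost {F : Type*} [NormedAddCommGroup F] [NormedSpace ℝ F]
    [FiniteDimensional ℝ F] [Finite κ] (Φ : F →ₗ[ℝ] V →ₗ[ℝ] ℝ)
    (hΦ : ∀ v ∈ ker P.eqMap, v ≠ 0 → ∃ f, Φ f v ≠ 0) : Dense {f | P.IsGenericCost (Φ f)} := by
  choose v hv hv₀ using fun T : {T : Set κ // ker (P.tight T) ≠ ⊥} =>
    Submodule.exists_mem_ne_zero_of_ne_bot T.2
  let φ (T) : F →L[ℝ] ℝ := (Φ.flip (v T)).toContinuousLinearMap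
  have hφ (T) : φ T ≠ 0 := fun h => by
    obtain ⟨f, hf⟩ := hΦ (v T) (mem_ker_tight.1 (hv T)).1 (hv₀ T)
    exact hf congr($h f)
  refine (dense_setOfPred_forall_ne hφ fun _ => 0).mono fun f hf T hT => ?_
  by_contra hne
  exact hf ⟨T, hne⟩ (hT (hv ⟨T, hne⟩))

end Topology

end BoxLP

section Counting

variable {α β : Type*} [Finite α] [Finite β]

theorem ncard_eq_ncard_preimage_inl_add_ncard_preimage_inr (s : Set (α ⊕ β)) :
    s.ncard = (Sum.inl ⁻¹' s).ncard + (Sum.inr ⁻¹' s).ncard := by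
  have hdisj : Disjoint (Sum.inl '' (Sum.inl ⁻¹' s)) (Sum.inr '' (Sum.inr ⁻¹' s)) :=
    Set.disjoint_image_inl_image_inr
  calc s.ncard = (Sum.inl '' (Sum.inl ⁻¹' s) ∪ Sum.inr '' (Sum.inr ⁻¹' s)).ncard := by
        rw [Set.image_preimage_inl_union_image_preimage_inr]
    _ = (Sum.inl ⁻¹' s).ncard + (Sum.inr ⁻¹' s).ncard := by
      rw [Set.ncard_union_eq hdisj, Set.ncard_image_of_injective _ Sum.inl_injective,
        Set.ncard_image_of_injective _ Sum.inr_injective]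

theorem ncard_setOfPred_eq_or_eq {x a b : α → ℝ} (hab : ∀ k, a k < b k) :
    {k | x k = a k ∨ x k = b k}.ncard = {k | x k = b k}.ncard + {k | x k = a k}.ncard := by
  have hdisj : Disjoint {k | x k = a k} {k | x k = b k} :=
    Set.disjoint_left.2 fun k ha hb => (hab k).ne (ha.symm.trans hb)
  rw [add_comm, ← Set.ncard_union_eq hdisj]
  rfl

theorem ncard_support_sub_le {n : ℕ} (x y : Fin n → ℝ) :
    (Function.support (x - y)).ncard ≤ nnz x + nnz y :=
  (Set.ncard_le_ncard (Function.support_sub x y)).trans (Set.ncard_union_le _ _)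

end Counting

section PosDef

theorem PosDiag.posDef {n : ℕ} {B : Matrix (Fin n) (Fin n) ℝ} (hB : PosDiag B) : B.PosDef := by
  have hdiag : B.IsDiag := fun e e' => hB.2 e e'
  rw [← hdiag.diagonal_diag]
  exact .diagonal hB.1

theorem transpose_mulVec_eq_zero_of_posDef {m n : Type*} [Fintype m] [Fintype n] {C : Matrix m n ℝ}
    {B : Matrix n n ℝ} (hB : B.PosDef) {θ : m → ℝ} (hθ : (C * B * Cᵀ) *ᵥ θ = 0) :
    Cᵀ *ᵥ θ = 0 := by
  by_contra hne
  refine (hB.dotProduct_mulVec_pos hne).ne ?_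
  calc 0 = θ ⬝ᵥ (C * B * Cᵀ) *ᵥ θ := by rw [hθ, dotProduct_zero]
    _ = star (Cᵀ *ᵥ θ) ⬝ᵥ B *ᵥ Cᵀ *ᵥ θ := by
      rw [star_trivial, Matrix.mulVec_transpose, ← Matrix.dotProduct_mulVec]
      simp only [Matrix.mulVec_mulVec, ← Matrix.mulVec_transpose, Matrix.mul_assoc]

end PosDef

namespace DCOPF

open Filter Topology Module LinearMap

/-- The phase angles with the first entry, the reference bus, at zero. The guard on `N` only serves
to name that entry. -/
def groundedAngles (N : ℕ) : Submodule ℝ (Fin N → ℝ) :=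
  ⨅ h : 0 < N, ker (proj (⟨0, h⟩ : Fin N))

theorem mem_groundedAngles {N : ℕ} {θ : Fin N → ℝ} :
    θ ∈ groundedAngles N ↔ ∀ h : 0 < N, θ ⟨0, h⟩ = 0 := by
  simp [groundedAngles]

theorem finrank_groundedAngles_add_one {N : ℕ} (hN : 0 < N) :
    finrank ℝ (groundedAngles N) + 1 = N := by
  have hproj : (proj ⟨0, hN⟩ : (Fin N → ℝ) →ₗ[ℝ] ℝ) ≠ 0 := fun h => by
    simpa using congr($h fun _ => 1)
  rw [groundedAngles, iInf_pos hN, Module.Dual.finrank_ker_add_one_of_ne_zero hproj,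
    finrank_fin_fun]

variable {NG NL E : ℕ}

section Program

variable (C : Matrix (Fin (NG + NL)) (Fin E) ℝ) (B : Matrix (Fin E) (Fin E) ℝ)

/-- The net power injected at each bus. -/
def nodalInjection : groundedAngles (NG + NL) →ₗ[ℝ] Fin (NG + NL) → ℝ :=
  (C * B * Cᵀ).mulVecLin ∘ₗ (groundedAngles _).subtype

/-- The power flow on each branch. -/
def flow : groundedAngles (NG + NL) →ₗ[ℝ] Fin E → ℝ :=
  (B * Cᵀ).mulVecLin ∘ₗ (groundedAngles _).subtype

/-- The power produced at each generator bus. -/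
def generation : groundedAngles (NG + NL) →ₗ[ℝ] Fin NG → ℝ :=
  funLeft ℝ ℝ (Fin.castAdd NL) ∘ₗ nodalInjection C B

/-- The power consumed at each load bus. -/
def load : groundedAngles (NG + NL) →ₗ[ℝ] Fin NL → ℝ :=
  -(funLeft ℝ ℝ (Fin.natAdd NG) ∘ₗ nodalInjection C B)

/-- The DC-OPF in the phase angles alone: the generation is eliminated through the nodal balance at
the generator buses, and the balance at the load buses remains as the equality constraint. -/
def dcopf : BoxLP (groundedAngles (NG + NL)) (Fin NL → ℝ) (Fin NG ⊕ Fin E) where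
  eqMap := load C B
  boxMap := (LinearEquiv.sumArrowLequivProdArrow (Fin NG) (Fin E) ℝ ℝ).symm ∘ₗ
    (generation C B).prod (flow C B)

/-- The cost of the generation determined by the phase angles, as a function of the cost vector. -/
def cost : (Fin NG → ℝ) →ₗ[ℝ] groundedAngles (NG + NL) →ₗ[ℝ] ℝ :=
  (dotProductBilin ℝ ℝ).compl₂ (generation C B)

/-- The lower and upper bounds of `dcopf`; the entries of `ξ` come in the order upper and lower
generation limits, upper and lower flow limits. -/
def limits (ξ : XiT NG E) : (Fin NG ⊕ Fin E → ℝ) × (Fin NG ⊕ Fin E → ℝ) :=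
  (Sum.elim ξ.2.1 ξ.2.2.2, Sum.elim ξ.1 ξ.2.2.1)

end Program

variable {C : Matrix (Fin (NG + NL)) (Fin E) ℝ} {B : Matrix (Fin E) (Fin E) ℝ}
  {f : Fin NG → ℝ} {ξ : XiT NG E} {sl : Fin NL → ℝ} {sg : Fin NG → ℝ}
  {θ : Fin (NG + NL) → ℝ} {v : groundedAngles (NG + NL)} {SG : Finset (Fin NG)}
  {SB : Finset (Fin E)}

theorem nodalInjection_eq_append (v : groundedAngles (NG + NL)) :
    nodalInjection C B v = Fin.append (generation C B v) fun j => -load C B v j := by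
  have hload : (fun j => -load C B v j) = fun j => nodalInjection C B v (Fin.natAdd NG j) :=
    funext fun _ => neg_neg _
  rw [hload]
  exact (Fin.append_castAdd_natAdd (f := nodalInjection C B v)).symm

theorem nodalInjection_eq_mulVec_flow (v : groundedAngles (NG + NL)) :
    nodalInjection C B v = C *ᵥ flow C B v := by
  simp [nodalInjection, flow, Matrix.mul_assoc]

theorem dcopf_boxMap (v : groundedAngles (NG + NL)) :
    (dcopf C B).boxMap v = Sum.elim (generation C B v) (flow C B v) := rfl

theorem surjective_limits : Function.Surjective (limits : XiT NG E → _) := fun b =>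
  ⟨(b.2 ∘ Sum.inl, b.1 ∘ Sum.inl, b.2 ∘ Sum.inr, b.1 ∘ Sum.inr), by
    simp [limits]⟩

theorem feasible_iff : Feasible C B ξ sl sg θ ↔
    ∃ v ∈ (dcopf C B).feasibleSet (limits ξ) sl, generation C B v = sg ∧ ↑v = θ := by
  constructor
  · rintro ⟨hground, hinj, hgen, hflow⟩
    let v : groundedAngles (NG + NL) := ⟨θ, mem_groundedAngles.2 hground⟩
    have hsg : generation C B v = sg := funext fun i =>
      congr($hinj (Fin.castAdd NL i)).trans (Fin.append_left _ _ i)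
    have hload : load C B v = sl := funext fun j =>
      neg_eq_iff_eq_neg.2 (congr($hinj (Fin.natAdd NG j)).trans (Fin.append_right _ _ j))
    refine ⟨v, ⟨hload, ?_⟩, hsg, rfl⟩
    rw [dcopf_boxMap, hsg]
    exact ⟨Sum.rec (fun i => (hgen i).1) fun e => (hflow e).1,
      Sum.rec (fun i => (hgen i).2) fun e => (hflow e).2⟩
  · rintro ⟨v, ⟨rfl, hlower, hupper⟩, rfl, rfl⟩
    exact ⟨mem_groundedAngles.1 v.2, nodalInjection_eq_append v,
      fun i => ⟨hlower (.inl i), hupper (.inl i)⟩, fun e => ⟨hlower (.inr e), hupper (.inr e)⟩⟩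

theorem isOptimal_iff : IsOptimal C B f ξ sl sg θ ↔
    ∃ v, (dcopf C B).IsMinimizer (cost C B f) (limits ξ) sl v ∧
      generation C B v = sg ∧ ↑v = θ := by
  constructor
  · rintro ⟨hfeas, hmin⟩
    obtain ⟨v, hv, rfl, rfl⟩ := feasible_iff.1 hfeas
    exact ⟨v, ⟨hv, fun w hw => hmin _ _ (feasible_iff.2 ⟨w, hw, rfl, rfl⟩)⟩, rfl, rfl⟩
  · rintro ⟨v, ⟨hv, hmin⟩, rfl, rfl⟩
    refine ⟨feasible_iff.2 ⟨v, hv, rfl, rfl⟩, fun sg' θ' h' => ?_⟩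
    obtain ⟨w, hw, rfl, rfl⟩ := feasible_iff.1 h'
    exact hmin hw

theorem OmegaSl_eq_inter : OmegaSl C B ξ =
    (Set.univ.pi fun _ => Set.Ioi 0) ∩
      {sl | ((dcopf C B).feasibleSet (limits ξ) sl).Nonempty} := by
  ext sl
  refine and_congr (by simp) ⟨?_, ?_⟩
  · rintro ⟨sg, θ, h⟩
    obtain ⟨v, hv, -⟩ := feasible_iff.1 h
    exact ⟨v, hv⟩
  · rintro ⟨v, hv⟩
    exact ⟨_, _, feasible_iff.2 ⟨v, hv, rfl, rfl⟩⟩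

theorem convex_OmegaSl : Convex ℝ (OmegaSl C B ξ) := by
  rw [OmegaSl_eq_inter]
  exact (convex_pi fun _ _ => convex_Ioi 0).inter
    ((dcopf C B).convex_setOfPred_feasibleSet_nonempty (limits ξ))

theorem bindingCount_eq (hξ : ∀ k, (limits ξ).1 k < (limits ξ).2 k) :
    bindingCount C B ξ (generation C B v) v = ((dcopf C B).active (limits ξ) v).ncard := by
  rw [ncard_eq_ncard_preimage_inl_add_ncard_preimage_inr, bindingCount, add_assoc]
  exact congrArg₂ (· + ·)
    (ncard_setOfPred_eq_or_eq (x := generation C B v) fun i => hξ (.inl i)).symm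
    (ncard_setOfPred_eq_or_eq (x := flow C B v) fun e => hξ (.inr e)).symm

theorem ker_nodalInjection (hNG : 0 < NG) (hConn : ConnectedIncidence C) (hB : B.PosDef) :
    ker (nodalInjection C B) = ⊥ := by
  refine ker_eq_bot'.2 fun v hv => ?_
  obtain ⟨a, ha⟩ := (hConn v).1 (transpose_mulVec_eq_zero_of_posDef hB hv)
  have hground := mem_groundedAngles.1 v.2 (Nat.add_pos_left hNG NL)
  ext i
  rw [ha] at hground ⊢
  exact hground

theorem injective_boxMap (hNG : 0 < NG) (hConn : ConnectedIncidence C) (hB : B.PosDef) :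
    Function.Injective (dcopf C B).boxMap := by
  refine ker_eq_bot.1 (ker_eq_bot'.2 fun v hv => ?_)
  have hflow : flow C B v = 0 := funext fun e => congr($hv (.inr e))
  have hinj : nodalInjection C B v = 0 := by
    rw [nodalInjection_eq_mulVec_flow, hflow, Matrix.mulVec_zero]
  exact ker_eq_bot'.1 (ker_nodalInjection hNG hConn hB) v hinj

theorem finrank_groundedAngles (NL : ℕ) (hNG : 0 < NG) :
    finrank ℝ (groundedAngles (NG + NL)) = finrank ℝ (Fin NL → ℝ) + (NG - 1) := by
  have := finrank_groundedAngles_add_one (Nat.add_pos_left hNG NL)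
  rw [finrank_fin_fun]
  omega

theorem range_nodalInjection (hNG : 0 < NG) (hConn : ConnectedIncidence C) (hB : B.PosDef) :
    range (nodalInjection C B) = {y : Fin (NG + NL) → ℝ | ∑ i, y i = 0} := by
  let sum : (Fin (NG + NL) → ℝ) →ₗ[ℝ] ℝ := ∑ i, proj i
  have hle : range (nodalInjection C B) ≤ ker sum := by
    rintro _ ⟨v, rfl⟩
    have hones : Cᵀ *ᵥ (fun _ => 1) = 0 := (hConn _).2 ⟨1, rfl⟩
    calc sum (nodalInjection C B v) = (fun _ => 1) ⬝ᵥ C *ᵥ flow C B v := by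
          simp [sum, nodalInjection_eq_mulVec_flow, dotProduct]
      _ = 0 := by rw [Matrix.dotProduct_mulVec, ← Matrix.mulVec_transpose, hones, zero_dotProduct]
  have hN := Nat.add_pos_left hNG NL
  have hsum : sum ≠ 0 := fun h => by
    simpa [sum] using congr($h (Pi.single ⟨0, hN⟩ 1))
  have hfinrank : finrank ℝ (range (nodalInjection C B)) = finrank ℝ (ker sum) := by
    have h₁ := finrank_range_of_inj (ker_eq_bot.1 (ker_nodalInjection hNG hConn hB))
    have h₂ := Module.Dual.finrank_ker_add_one_of_ne_zero hsum
    have h₃ := finrank_groundedAngles_add_one hN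
    rw [finrank_fin_fun] at h₂
    omega
  rw [Submodule.eq_of_le_of_finrank_eq hle hfinrank]
  ext y
  simp [sum]

theorem reference_dotProduct {N : ℕ} (θ : groundedAngles N) :
    (fun j : Fin N => if (j : ℕ) = 0 then (1 : ℝ) else 0) ⬝ᵥ θ = 0 := by
  refine Finset.sum_eq_zero fun j _ => ?_
  dsimp only
  split_ifs with hj
  · have hzero : j = ⟨0, j.pos⟩ := Fin.ext hj
    rw [one_mul, hzero, mem_groundedAngles.1 θ.2]
  · rw [zero_mul]

theorem eqGrad_dotProduct_eq_zero (hload : load C B v = 0) (k : Unit ⊕ Fin (NG + NL)) :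
    (eqGrad C B k).1 ⬝ᵥ generation C B v + (eqGrad C B k).2 ⬝ᵥ v = 0 := by
  rcases k with _ | i
  · simp only [eqGrad, zero_dotProduct, reference_dotProduct, add_zero]
  have hrow : (C * B * Cᵀ) i ⬝ᵥ v = nodalInjection C B v i := rfl
  simp only [eqGrad]
  rw [hrow, nodalInjection_eq_append, hload]
  refine Fin.addCases (fun i => ?_) (fun j => ?_) i
  · simp [dotProduct, ← Fin.ext_iff]
  · have hne (i : Fin NG) : (i : ℕ) ≠ NG + j := (i.2.trans_le (Nat.le_add_right _ _)).ne
    simp [dotProduct, hne]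

theorem ker_tight_eq_bot_of_perp
    (hNG : 0 < NG) (hcard : SG.card + SB.card = NG - 1) (hperp : Perp C B SG SB) :
    ker ((dcopf C B).tight ↑(SG.disjSum SB)) = ⊥ := by
  refine ker_eq_bot'.2 fun v hv => ?_
  obtain ⟨hload, htight⟩ := BoxLP.mem_ker_tight.1 hv
  have hspan := hperp.span_eq_top_of_card_eq_finrank' (by simp; omega)
  let ℓ : (Fin NG → ℝ) × (Fin (NG + NL) → ℝ) →ₗ[ℝ] ℝ :=
    ((dotProductBilin ℝ ℝ).flip (generation C B v)).coprod
      ((dotProductBilin ℝ ℝ).flip (v : Fin (NG + NL) → ℝ))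
  have hℓ_apply (a x) : ℓ (a, x) = a ⬝ᵥ generation C B v + x ⬝ᵥ v := rfl
  have hℓ : ℓ = 0 := by
    refine LinearMap.ext_on_range hspan ?_
    rintro (k | ⟨i, hi⟩ | ⟨e, he⟩)
    · exact eqGrad_dotProduct_eq_zero hload k
    · have hgen : generation C B v i = 0 := htight (.inl i) (by simpa using hi)
      change ℓ (Pi.single i 1, 0) = 0
      rw [hℓ_apply, single_one_dotProduct, zero_dotProduct, hgen, add_zero]
    · have hflow : flow C B v e = 0 := htight (.inr e) (by simpa using he)
      change ℓ (0, (B * Cᵀ) e) = 0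
      rw [hℓ_apply, zero_dotProduct, zero_add]
      exact hflow
  ext j
  simpa [ℓ] using congr($hℓ (0, Pi.single j 1))

theorem Mmat_mulVec (v : groundedAngles (NG + NL)) :
    Mmat C B *ᵥ v = Fin.snoc (nodalInjection C B v) 0 := by
  ext i
  refine Fin.lastCases ?_ (fun i => ?_) i
  · simpa [Mmat, mulVec] using reference_dotProduct v
  · simp only [mulVec, Mmat, Fin.val_castSucc, Fin.is_lt, of_apply, dite_true, Fin.snoc_castSucc]
    rfl

theorem cost_apply (f : Fin NG → ℝ) (v : groundedAngles (NG + NL)) :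
    cost C B f v = f ⬝ᵥ generation C B v := rfl

theorem isMultiplier_of_isKKT (hB : B.IsSymm) {τ : Fin (NG + NL + 1) → ℝ}
    {μp μm : Fin E → ℝ} {lp lm : Fin NG → ℝ} (h : IsKKT C B f ξ sl sg θ τ μp μm lp lm) :
    (dcopf C B).IsMultiplier (cost C B f) (Sum.elim (lm - lp) (μm - μp)) := by
  obtain ⟨-, hθ, hsg, -⟩ := h
  intro v hv
  let τg (i : Fin NG) : ℝ := τ (Fin.castLE (by omega) i)
  have hf : f = τg + (lm - lp) := by
    ext i
    simp only [τg, Pi.add_apply, Pi.sub_apply]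
    linarith [hsg i]
  have hload : load C B v = 0 := hv
  have hM : τ ⬝ᵥ Mmat C B *ᵥ v = τg ⬝ᵥ generation C B v := by
    rw [Mmat_mulVec, nodalInjection_eq_append, hload]
    simp only [dotProduct, Fin.sum_univ_castSucc, Fin.sum_univ_add, Fin.snoc_castSucc,
      Fin.snoc_last, Fin.append_left, Fin.append_right, Pi.zero_apply, neg_zero, mul_zero,
      Finset.sum_const_zero, add_zero]
    rfl
  have hflow : (C * B)ᵀ *ᵥ v = flow C B v := by
    rw [Matrix.transpose_mul, hB.eq]
    rfl
  have hstationary : τg ⬝ᵥ generation C B v + (μp - μm) ⬝ᵥ flow C B v = 0 :=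
    calc _ = τ ⬝ᵥ Mmat C B *ᵥ v + (μp - μm) ⬝ᵥ (C * B)ᵀ *ᵥ v := by rw [hM, hflow]
      _ = v ⬝ᵥ ((Mmat C B)ᵀ *ᵥ τ + (C * B) *ᵥ (μp - μm)) := by
        rw [dotProduct_add, dotProduct_transpose_mulVec, dotProduct_transpose_mulVec]
      _ = 0 := by rw [hθ, dotProduct_zero]
  rw [cost_apply, dcopf_boxMap, sumElim_dotProduct_sumElim, hf, add_dotProduct]
  simp only [sub_dotProduct] at hstationary ⊢
  linarith

theorem le_nnz_of_isKKT (hNG : 0 < NG) (hB : B.IsSymm)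
    (hf : (dcopf C B).IsGenericCost (cost C B f)) {τ : Fin (NG + NL + 1) → ℝ}
    {μp μm : Fin E → ℝ} {lp lm : Fin NG → ℝ} (h : IsKKT C B f ξ sl sg θ τ μp μm lp lm) :
    NG - 1 ≤ nnz μp + nnz μm + nnz lp + nnz lm := by
  have hle := hf.finrank_le_ncard_support (isMultiplier_of_isKKT hB h)
  rw [finrank_groundedAngles NL hNG, ncard_eq_ncard_preimage_inl_add_ncard_preimage_inr] at hle
  have hgen : (Sum.inl ⁻¹' Function.support (Sum.elim (lm - lp) (μm - μp))).ncard ≤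
    nnz lm + nnz lp := ncard_support_sub_le lm lp
  have hflow : (Sum.inr ⁻¹' Function.support (Sum.elim (lm - lp) (μm - μp))).ncard ≤
    nnz μm + nnz μp := ncard_support_sub_le μm μp
  omega

theorem mem_OmegaF (hNG : 0 < NG) (hConn : ConnectedIncidence C) (hB : B.PosDef)
    (hf₀ : ∀ i, 0 ≤ f i) (hf : (dcopf C B).IsGenericCost (cost C B f)) : f ∈ OmegaF C B := by
  refine ⟨hf₀, fun ξ _ sl hsl => ⟨?_, fun _ _ _ _ _ _ _ => le_nnz_of_isKKT hNG ?_ hf⟩⟩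
  · rw [OmegaSl_eq_inter] at hsl
    obtain ⟨v, hv⟩ := BoxLP.exists_isMinimizer (injective_boxMap hNG hConn hB) (cost C B f) hsl.2
    refine ⟨(generation C B v, v), isOptimal_iff.2 ⟨v, hv, rfl, rfl⟩, fun ⟨sg, θ⟩ h => ?_⟩
    obtain ⟨w, hw, rfl, rfl⟩ := isOptimal_iff.1 h
    rw [hf.eq_of_isMinimizer hv hw]
  · exact hB.isHermitian

theorem mem_TOmegaSl (hsl : sl ∈ OmegaSl C B ξ) (hξ : ∀ k, (limits ξ).1 k < (limits ξ).2 k)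
    (hcount : ∀ v, (dcopf C B).IsMinimizer (cost C B f) (limits ξ) sl v →
      ((dcopf C B).active (limits ξ) v).ncard = NG - 1) : sl ∈ TOmegaSl C B f ξ := by
  refine ⟨hsl, fun sg θ h => ?_⟩
  obtain ⟨v, hv, rfl, rfl⟩ := isOptimal_iff.1 h
  rw [bindingCount_eq hξ, hcount v hv]

theorem exists_pos_isGenericCost (hNG : 0 < NG) (hConn : ConnectedIncidence C) (hB : B.PosDef) :
    ∃ f : Fin NG → ℝ, (∀ i, 0 < f i) ∧ (dcopf C B).IsGenericCost (cost C B f) := by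
  have hcost (v) (hv : v ∈ ker (dcopf C B).eqMap) (hv₀ : v ≠ 0) : ∃ f, cost C B f v ≠ 0 := by
    refine ⟨generation C B v, fun h => hv₀ ?_⟩
    have hgen : generation C B v = 0 := dotProduct_self_eq_zero.1 h
    have hload : load C B v = 0 := hv
    refine ker_eq_bot'.1 (ker_nodalInjection hNG hConn hB) v ?_
    ext i
    rw [nodalInjection_eq_append, hgen, hload]
    refine Fin.addCases (fun i => ?_) (fun j => ?_) i <;> simp
  have hopen : IsOpen (Set.univ.pi fun _ : Fin NG => Set.Ioi (0 : ℝ)) :=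
    isOpen_set_pi Set.finite_univ fun _ _ => isOpen_Ioi
  obtain ⟨f, hpos, hf⟩ := (BoxLP.dense_setOfPred_isGenericCost (cost C B) hcost).inter_open_nonempty
    _ hopen ⟨1, fun _ _ => zero_lt_one' ℝ⟩
  exact ⟨f, fun i => hpos i trivial, hf⟩

theorem exists_generation_load_pos (hNG : 0 < NG) (hNL : 0 < NL) (hConn : ConnectedIncidence C)
    (hB : B.PosDef) : ∃ v, (∀ i, 0 < generation C B v i) ∧ ∀ j, 0 < load C B v j := by
  let y : Fin (NG + NL) → ℝ := Fin.append (fun _ => NL) fun _ => -NG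
  have hy : y ∈ {y : Fin (NG + NL) → ℝ | ∑ i, y i = 0} := by
    simp [y, Fin.sum_univ_add, mul_comm]
  rw [← range_nodalInjection hNG hConn hB] at hy
  obtain ⟨v, hv⟩ := hy
  refine ⟨v, fun i => ?_, fun j => ?_⟩
  · have : generation C B v i = NL := congr($hv (Fin.castAdd NL i)).trans (Fin.append_left ..)
    rw [this]
    exact_mod_cast hNL
  · have : load C B v j = NG :=
      neg_eq_iff_eq_neg.2 (congr($hv (Fin.natAdd NG j)).trans (Fin.append_right ..))
    rw [this]
    exact_mod_cast hNG

theorem exists_generic_limits (hf : (dcopf C B).IsGenericCost (cost C B f)) (hNG : 0 < NG)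
    (hcard : SG.card + SB.card = NG - 1) (hperp : Perp C B SG SB)
    {v₀ : groundedAngles (NG + NL)} (hgen : ∀ i, 0 < generation C B v₀ i) :
    ∃ ξ : XiT NG E, (∀ i, 0 < ξ.2.1 i) ∧ (∀ k, (limits ξ).1 k < (limits ξ).2 k) ∧
      Dense {sl | ∀ v, load C B v = sl → ((dcopf C B).active (limits ξ) v).ncard ≤ NG - 1} ∧
      ∀ᶠ sl in 𝓝 (load C B v₀), ∃ v, (dcopf C B).IsMinimizer (cost C B f) (limits ξ) sl v ∧
        (dcopf C B).active (limits ξ) v = SG.disjSum SB := by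
  have hfinrank : finrank ℝ (groundedAngles (NG + NL)) =
      finrank ℝ (Fin NL → ℝ) + Set.ncard (SG.disjSum SB : Set (Fin NG ⊕ Fin E)) := by
    rw [Set.ncard_coe_finset, Finset.card_disjSum, hcard, finrank_groundedAngles NL hNG]
  have hpos : ∀ᶠ b : (Fin NG ⊕ Fin E → ℝ) × (Fin NG ⊕ Fin E → ℝ) in
      𝓝 ((dcopf C B).boxMap v₀, (dcopf C B).boxMap v₀), ∀ i, 0 < b.1 (.inl i) :=
    eventually_all.2 fun i => ContinuousAt.eventually_lt (by fun_prop) (by fun_prop) (hgen i)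
  obtain ⟨b, ⟨hlt, hdense, hactive⟩, hpos⟩ :=
    ((BoxLP.frequently_dense_and_eventually_active_eq hf
      (ker_tight_eq_bot_of_perp hNG hcard hperp) hfinrank v₀).and_eventually hpos).exists
  obtain ⟨ξ, rfl⟩ := surjective_limits b
  simp only [finrank_groundedAngles NL hNG, add_le_add_iff_left] at hdense
  exact ⟨ξ, hpos, hlt, hdense, hactive⟩

variable (C B ξ SG SB) in
/-- The binding inequality constraints at `(sg, θ)` are one generation bound for each generator in
`SG` and one flow bound for each branch in `SB`. -/
def BindsExactly (sg : Fin NG → ℝ) (θ : Fin (NG + NL) → ℝ) : Prop :=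
  (∀ i : Fin NG, ((i ∈ SG) ↔ (sg i = ξ.1 i ∨ sg i = ξ.2.1 i)) ∧
    ¬(sg i = ξ.1 i ∧ sg i = ξ.2.1 i)) ∧
  (∀ e : Fin E, ((e ∈ SB) ↔
      (((B * Cᵀ) *ᵥ θ) e = ξ.2.2.1 e ∨ ((B * Cᵀ) *ᵥ θ) e = ξ.2.2.2 e)) ∧
    ¬(((B * Cᵀ) *ᵥ θ) e = ξ.2.2.1 e ∧ ((B * Cᵀ) *ᵥ θ) e = ξ.2.2.2 e))

theorem bindsExactly_of_active_eq (hξ : ∀ k, (limits ξ).1 k < (limits ξ).2 k)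
    (hv : (dcopf C B).active (limits ξ) v = SG.disjSum SB) :
    BindsExactly C B ξ SG SB (generation C B v) v := by
  refine ⟨fun i => ⟨?_, fun h => (hξ (.inl i)).ne (h.2.symm.trans h.1)⟩,
    fun e => ⟨?_, fun h => (hξ (.inr e)).ne (h.2.symm.trans h.1)⟩⟩
  · rw [← Finset.inl_mem_disjSum (t := SB), ← Finset.mem_coe, ← hv, or_comm]
    rfl
  · rw [← Finset.inr_mem_disjSum (s := SG), ← Finset.mem_coe, ← hv, or_comm]
    rfl

theorem eventually_bindsExactly {sl₀ : Fin NL → ℝ} (hf : (dcopf C B).IsGenericCost (cost C B f))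
    (hcard : SG.card + SB.card = NG - 1) (hξ : ∀ k, (limits ξ).1 k < (limits ξ).2 k)
    (hsl₀ : ∀ j, 0 < sl₀ j)
    (hactive : ∀ᶠ sl in 𝓝 sl₀, ∃ v, (dcopf C B).IsMinimizer (cost C B f) (limits ξ) sl v ∧
      (dcopf C B).active (limits ξ) v = SG.disjSum SB) :
    ∀ᶠ sl in 𝓝 sl₀, sl ∈ TOmegaSl C B f ξ ∧
      ∀ sg θ, IsOptimal C B f ξ sl sg θ → BindsExactly C B ξ SG SB sg θ := by
  have hpos : ∀ᶠ sl in 𝓝 sl₀, ∀ j, 0 < sl j :=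
    eventually_all.2 fun j => (continuous_apply j).continuousAt.eventually_const_lt (hsl₀ j)
  filter_upwards [hpos, hactive] with sl hpos ⟨v, hv, hS⟩
  have hsl : sl ∈ OmegaSl C B ξ := OmegaSl_eq_inter.ge ⟨fun j _ => hpos j, v, hv.1⟩
  refine ⟨mem_TOmegaSl hsl hξ fun w hw => ?_, fun sg θ h => ?_⟩
  · rw [hf.eq_of_isMinimizer hw hv, hS, Set.ncard_coe_finset, Finset.card_disjSum, hcard]
  · obtain ⟨w, hw, rfl, rfl⟩ := isOptimal_iff.1 h
    rw [hf.eq_of_isMinimizer hw hv]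
    exact bindsExactly_of_active_eq hξ hS

theorem OmegaSl_subset_closure_TOmegaSl (hNG : 0 < NG)
    (hf : (dcopf C B).IsGenericCost (cost C B f)) (hξ : ∀ k, (limits ξ).1 k < (limits ξ).2 k)
    (hne : (interior (OmegaSl C B ξ)).Nonempty)
    (hle : Dense {sl | ∀ v, load C B v = sl →
      ((dcopf C B).active (limits ξ) v).ncard ≤ NG - 1}) :
    OmegaSl C B ξ ⊆ closure (TOmegaSl C B f ξ) := by
  refine (subset_closure_inter_of_convex_of_dense convex_OmegaSl hne hle).trans
    (closure_mono fun sl ⟨hsl, hle⟩ => mem_TOmegaSl hsl hξ fun v hv => ?_)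
  have hge := hf.finrank_le_ncard_active hv
  rw [finrank_groundedAngles NL hNG] at hge
  exact (hle v hv.1.1).antisymm (Nat.le_of_add_le_add_left hge)

theorem mem_OmegaXi (hpos : ∀ i, 0 < ξ.2.1 i) (hξ : ∀ k, (limits ξ).1 k < (limits ξ).2 k)
    (hsl : sl ∈ OmegaSl C B ξ) : ξ ∈ OmegaXi C B :=
  ⟨fun i => (hpos i).le, fun i => hξ (.inl i), fun e => hξ (.inr e), sl, hsl⟩

end DCOPF

open DCOPF in
theorem exists_good_instance_with_binding_pattern_general {NG NL E : ℕ}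
    (hNG : 0 < NG) (hNL : 0 < NL)
    (C : Matrix (Fin (NG + NL)) (Fin E) ℝ) (B : Matrix (Fin E) (Fin E) ℝ)
    (hConn : ConnectedIncidence C) (hB : B.PosDef)
    (SG : Finset (Fin NG)) (SB : Finset (Fin E))
    (hcard : SG.card + SB.card = NG - 1) (hperp : Perp C B SG SB) :
    ∃ (f : Fin NG → ℝ) (ξ : XiT NG E),
      f ∈ OmegaF C B ∧ ξ ∈ OmegaXi C B ∧
      closure (interior (OmegaSl C B ξ)) = closure (OmegaSl C B ξ) ∧
      OmegaSl C B ξ ⊆ closure (TOmegaSl C B f ξ) ∧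
      ∃ (c : Fin NL → ℝ) (r : ℝ), 0 < r ∧ Metric.ball c r ⊆ TOmegaSl C B f ξ ∧
        ∀ sl ∈ Metric.ball c r, ∀ sg θ, IsOptimal C B f ξ sl sg θ →
          (∀ i : Fin NG, ((i ∈ SG) ↔ (sg i = ξ.1 i ∨ sg i = ξ.2.1 i)) ∧
            ¬(sg i = ξ.1 i ∧ sg i = ξ.2.1 i)) ∧
          (∀ e : Fin E, ((e ∈ SB) ↔
              (((B * Cᵀ) *ᵥ θ) e = ξ.2.2.1 e ∨ ((B * Cᵀ) *ᵥ θ) e = ξ.2.2.2 e)) ∧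
            ¬(((B * Cᵀ) *ᵥ θ) e = ξ.2.2.1 e ∧ ((B * Cᵀ) *ᵥ θ) e = ξ.2.2.2 e)) := by
  obtain ⟨f, hfpos, hf⟩ := exists_pos_isGenericCost hNG hConn hB
  obtain ⟨v₀, hgen, hload⟩ := exists_generation_load_pos hNG hNL hConn hB
  obtain ⟨ξ, hpos, hξ, hle, hactive⟩ := exists_generic_limits hf hNG hcard hperp hgen
  have hpattern := eventually_bindsExactly hf hcard hξ hload hactive
  have hne : (interior (OmegaSl C B ξ)).Nonempty :=
    ⟨_, mem_interior_iff_mem_nhds.2 (hpattern.mono fun _ h => h.1.1)⟩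
  obtain ⟨r, hr, hball⟩ := Metric.eventually_nhds_iff_ball.1 hpattern
  exact ⟨f, ξ, mem_OmegaF hNG hConn hB (fun i => (hfpos i).le) hf,
    mem_OmegaXi hpos hξ hpattern.self_of_nhds.1.1,
    convex_OmegaSl.closure_interior_eq_closure_of_nonempty_interior hne,
    OmegaSl_subset_closure_TOmegaSl hNG hf hξ hne hle, load C B v₀, r, hr,
    fun sl hsl => (hball sl hsl).1, fun sl hsl => (hball sl hsl).2⟩

theorem exists_good_instance_with_binding_pattern {NG NL E : ℕ} (hNG : 0 < NG) (hNL : 0 < NL) (hE : 0 < E)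
    (C : Matrix (Fin (NG + NL)) (Fin E) ℝ) (B : Matrix (Fin E) (Fin E) ℝ)
    (hInc : IsIncidence C) (hConn : ConnectedIncidence C) (hB : PosDiag B)
    (SG : Finset (Fin NG)) (SB : Finset (Fin E))
    (hcard : SG.card + SB.card = NG - 1) (hperp : Perp C B SG SB) :
    ∃ (f : Fin NG → ℝ) (ξ : XiT NG E),
      f ∈ OmegaF C B ∧ ξ ∈ OmegaXi C B ∧
      closure (interior (OmegaSl C B ξ)) = closure (OmegaSl C B ξ) ∧
      OmegaSl C B ξ ⊆ closure (TOmegaSl C B f ξ) ∧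
      ∃ (c : Fin NL → ℝ) (r : ℝ), 0 < r ∧ Metric.ball c r ⊆ TOmegaSl C B f ξ ∧
        ∀ sl ∈ Metric.ball c r, ∀ sg θ, IsOptimal C B f ξ sl sg θ →
          (∀ i : Fin NG, ((i ∈ SG) ↔ (sg i = ξ.1 i ∨ sg i = ξ.2.1 i)) ∧
            ¬(sg i = ξ.1 i ∧ sg i = ξ.2.1 i)) ∧
          (∀ e : Fin E, ((e ∈ SB) ↔
              (((B * Cᵀ) *ᵥ θ) e = ξ.2.2.1 e ∨ ((B * Cᵀ) *ᵥ θ) e = ξ.2.2.2 e)) ∧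
            ¬(((B * Cᵀ) *ᵥ θ) e = ξ.2.2.1 e ∧ ((B * Cᵀ) *ᵥ θ) e = ξ.2.2.2 e)) := by
  exact exists_good_instance_with_binding_pattern_general hNG hNL C B hConn hB.posDef SG SB
    hcard hperp

end
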